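/- Let λ = 3 log(2)²/π². For each dimension s ≥ 1 there exists a constant C > 0 (depending on s) such that, as m → ∞, |{𝐤 ∈ ℕ₀^s ∖ {0} : ‖𝛋‖₁ ≤ λm²/s}| ∼ C · 2^m/√m, i.e. the ratio of the two sides tends to 1. -/

import Mathlib

open MeasureTheory ProbabilityTheory
open scoped ENNReal

namespace MedianQMC


/-- The set of 0-indexed positions of nonzero binary digits of `k`
(so `κ`, the 1-indexed set from the paper, is the image of this under `·+1`). -/
def bitFinset (k : ℕ) : Finset ℕ := (Finset.range (k+1)).filter (fun i => k.testBit i)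

/-- `‖κ‖₁ = ∑_{ℓ∈κ} ℓ` for the 1-indexed digit set `κ` of `k`. -/
def norm1 (k : ℕ) : ℕ := ∑ i ∈ bitFinset k, (i+1)

/-- `‖𝛋‖₁`. -/
def norm1Vec {s : ℕ} (k : Fin s → ℕ) : ℕ := ∑ j, norm1 (k j)

/-- `‖𝛋‖₀`, the total number of nonzero binary digits. -/
def norm0Vec {s : ℕ} (k : Fin s → ℕ) : ℕ := ∑ j, (bitFinset (k j)).card

/-- `‖⌈𝛋⌉‖₁`; note `⌈κ_j⌉ = Nat.size (k j)`. -/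
def ceilSum {s : ℕ} (k : Fin s → ℕ) : ℕ := ∑ j, Nat.size (k j)

/-- the support `s(𝐤)`. -/
def supp {s : ℕ} (k : Fin s → ℕ) : Finset (Fin s) := Finset.univ.filter (fun j => k j ≠ 0)

/-- Row `i` (0-indexed; paper row `i+1`) of `C j`, as a vector, `0` if out of range. -/
def rowOf {s m : ℕ} (C : Fin s → Matrix (Fin m) (Fin m) (ZMod 2)) (j : Fin s) (i : ℕ) :
    Fin m → ZMod 2 :=
  fun c => if h : i < m then C j ⟨i, h⟩ c else 0

/-- The row space of the stacked matrix `C^{(q)}` consisting of the first `q j` rows of each `C j`. -/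
def rowSpace {s m : ℕ} (C : Fin s → Matrix (Fin m) (Fin m) (ZMod 2)) (q : Fin s → ℕ) :
    Submodule (ZMod 2) (Fin m → ZMod 2) :=
  Submodule.span (ZMod 2) {v | ∃ j i, i < q j ∧ v = rowOf C j i}

/-- The rank of the stacked matrix `C^{(q)}`. -/
noncomputable def stackRank {s m : ℕ} (C : Fin s → Matrix (Fin m) (Fin m) (ZMod 2))
    (q : Fin s → ℕ) : ℕ :=
  Module.finrank (ZMod 2) (rowSpace C q)

/-- `C₁,…,C_s` generate a digital `(t,m,s)`-net in base 2: every stacked matrix `C^{(q)}`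
with `∑ q j = m - t` has full row rank `m - t`.  (Note each row of `C^{(q)}` is a genuine
row since `q j ≤ m - t ≤ m` automatically.) -/
def IsDigitalNet {s m : ℕ} (t : ℕ) (C : Fin s → Matrix (Fin m) (Fin m) (ZMod 2)) : Prop :=
  ∀ q : Fin s → ℕ, (∑ j, q j) = m - t → stackRank C q = m - t

/-- structural constraints of a linear scramble matrix with rows indexed by `ℕ`
(0-indexed; paper row `ℓ` is row `ℓ-1` here): ones on the diagonal, zeros above it. -/
def IsLinearScramble {s m : ℕ} (M : Fin s → ℕ → Fin m → ZMod 2) : Prop :=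
  ∀ j : Fin s, ∀ r : Fin m, M j (r : ℕ) r = 1 ∧ ∀ ℓ : ℕ, ℓ < (r : ℕ) → M j ℓ r = 0

/-- The condition `∑_{j=1}^s k⃗_jᵀ M_j C_j = 0`. -/
def ZeroCond {s m : ℕ} (C : Fin s → Matrix (Fin m) (Fin m) (ZMod 2))
    (M : Fin s → ℕ → Fin m → ZMod 2) (k : Fin s → ℕ) : Prop :=
  ∀ c : Fin m, (∑ j, ∑ i ∈ bitFinset (k j), ∑ r : Fin m, M j i r * C j r c) = 0

/-- index type for the free (random) entries of the scramble matrices: entries strictly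
below the diagonal, i.e. with column index `< ` row index. -/
def FreeIdx (s m : ℕ) : Type := {p : Fin s × ℕ × Fin m // (p.2.2 : ℕ) < p.2.1}

/-- index type for all random bits of a scramble-with-digital-shift. -/
def ScrIdx (s m : ℕ) : Type := FreeIdx s m ⊕ (Fin s × ℕ)

variable {Ω : Type*}

/-- the family of free entries of the random matrices. -/
def freeVar {s m : ℕ} (M : Ω → Fin s → ℕ → Fin m → ZMod 2) : FreeIdx s m → Ω → ZMod 2 :=
  fun p ω => M ω p.1.1 p.1.2.1 p.1.2.2

/-- the family of all random bits of a scramble-with-digital-shift. -/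
def scrVar {s m : ℕ} (M : Ω → Fin s → ℕ → Fin m → ZMod 2)
    (D : Ω → Fin s → ℕ → ZMod 2) : ScrIdx s m → Ω → ZMod 2
  | Sum.inl p => freeVar M p
  | Sum.inr q => fun ω => D ω q.1 q.2

/-- `x = Σ_{ℓ≥1} 2^{−ℓ} y_ℓ` (here `y` is 0-indexed). -/
noncomputable def coordI (y : ℕ → ZMod 2) : ℝ := ∑' ℓ : ℕ, ((y ℓ).val : ℝ) / 2 ^ (ℓ + 1)

/-- finite-precision coordinate `x = Σ_{ℓ=1}^E 2^{−ℓ} y_ℓ`. -/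
noncomputable def coordF (E : ℕ) (y : ℕ → ZMod 2) : ℝ :=
  ∑ ℓ ∈ Finset.range E, ((y ℓ).val : ℝ) / 2 ^ (ℓ + 1)

/-- digit string `M_j C_j ī + D_j` of the scrambled point `x_{ij}`. -/
def scrDigits {s m : ℕ} (C : Fin s → Matrix (Fin m) (Fin m) (ZMod 2))
    (M : Fin s → ℕ → Fin m → ZMod 2) (D : Fin s → ℕ → ZMod 2) (i : ℕ) (j : Fin s) :
    ℕ → ZMod 2 :=
  fun ℓ => (∑ r : Fin m, M j ℓ r * ∑ c : Fin m, C j r c *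
      (if i.testBit (c : ℕ) then 1 else 0)) + D j ℓ

/-- infinite-precision estimator `μ̂_∞ = 2^{-m} ∑_{i=0}^{2^m-1} f(x_i)`. -/
noncomputable def estInf {s m : ℕ} (f : (Fin s → ℝ) → ℝ)
    (C : Fin s → Matrix (Fin m) (Fin m) (ZMod 2))
    (M : Fin s → ℕ → Fin m → ZMod 2) (D : Fin s → ℕ → ZMod 2) : ℝ :=
  ((2 : ℝ) ^ m)⁻¹ * ∑ i ∈ Finset.range (2 ^ m), f (fun j => coordI (scrDigits C M D i j))

/-- precision-`E` estimator `μ̂_E`. -/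
noncomputable def estE {s m : ℕ} (E : ℕ) (f : (Fin s → ℝ) → ℝ)
    (C : Fin s → Matrix (Fin m) (Fin m) (ZMod 2))
    (M : Fin s → ℕ → Fin m → ZMod 2) (D : Fin s → ℕ → ZMod 2) : ℝ :=
  ((2 : ℝ) ^ m)⁻¹ * ∑ i ∈ Finset.range (2 ^ m), f (fun j => coordF E (scrDigits C M D i j))

/-- half-open unit cube `[0,1)^s`. -/
def cube (s : ℕ) : Set (Fin s → ℝ) := Set.univ.pi fun _ => Set.Ico (0:ℝ) 1

/-- closed unit cube `[0,1]^s`. -/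
def cubeC (s : ℕ) : Set (Fin s → ℝ) := Set.univ.pi fun _ => Set.Icc (0:ℝ) 1

/-- `ℓ`-th (0-indexed; paper `ℓ+1`) binary digit of `x ∈ [0,1)`, using the expansion ending
in zeros for dyadic rationals. -/
noncomputable def rdigit (x : ℝ) (i : ℕ) : ℕ := (⌊x * 2 ^ (i+1)⌋).toNat % 2

/-- Walsh function `wal_k`. -/
noncomputable def walsh (k : ℕ) (x : ℝ) : ℝ := (-1 : ℝ) ^ (∑ i ∈ bitFinset k, rdigit x i)

/-- multivariate Walsh function `wal_𝐤`. -/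
noncomputable def walshVec {s : ℕ} (k : Fin s → ℕ) (x : Fin s → ℝ) : ℝ :=
  ∏ j, walsh (k j) (x j)

/-- Walsh coefficient `f̂(𝐤)`. -/
noncomputable def fhat {s : ℕ} (f : (Fin s → ℝ) → ℝ) (k : Fin s → ℕ) : ℝ :=
  ∫ x in cube s, f x * walshVec k x

/-- the sign `(−1)^{Σ_j k⃗_jᵀ D_j}`. -/
noncomputable def walshSign {s : ℕ} (D : Fin s → ℕ → ZMod 2) (k : Fin s → ℕ) : ℝ :=
  (-1 : ℝ) ^ (∑ j, ∑ i ∈ bitFinset (k j), (D j i).val)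

/-- the constant `λ = 3 log(2)²/π²`. -/
noncomputable def lam : ℝ := 3 * Real.log 2 ^ 2 / Real.pi ^ 2

/-- the `i`-th smallest (0-indexed) of the values `v`. -/
noncomputable def orderStat {n : ℕ} (v : Fin n → ℝ) (i : ℕ) : ℝ :=
  (((List.ofFn v).mergeSort fun a b => @decide (a ≤ b) (Classical.propDecidable _)).getD i 0)

end MedianQMC

/-!
By uniqueness of binary digits, the number of `𝐤` with `‖𝛋‖₁ = n` is the coefficient of `qⁿ` in
`∏_{ℓ ≥ 1} (1 + q^ℓ)^s`. Put `q = e^{-z}`. The trapezoid rule for `t ↦ log (1 + e^{-tz})`, whose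
integral over `(0, ∞)` is `π² / (12 z)`, gives
`∏ (1 + e^{-ℓz}) = exp (π² / (12 z) - log 2 / 2 + o(1))` for `z → 0` in the sector
`|Im z| ≤ Re z`, and for arbitrary `Im z` an elementary estimate bounds the product by a
Poisson-kernel type sum. With `K = s π² / 12`, the integrand of Cauchy's formula for the partial
sum of the coefficients up to `N ≈ K / β²` therefore has a saddle point at `z = β`, of width
`β^(3/2)`: after rescaling by this width, dominated convergence produces a Gaussian integral and
the growth `e^{2K/β} √β` as `β → 0`. For `N = λ m² / s` one has `e^{2K/β} = 2^m`.
-/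

namespace MedianQMC

open Filter Topology
open scoped Real
open Complex (I)

lemma mem_bitFinset {k i : ℕ} : i ∈ bitFinset k ↔ k.testBit i := by
  refine ⟨fun h => (Finset.mem_filter.mp h).2, fun h => ?_⟩
  have hik : i < k := Nat.lt_two_pow_self.trans_le (Nat.ge_two_pow_of_testBit h)
  exact Finset.mem_filter.mpr ⟨Finset.mem_range.mpr (by omega), h⟩

lemma bitFinset_eq_equivBitIndices (k : ℕ) : bitFinset k = Finset.equivBitIndices k := by
  ext i
  simp [mem_bitFinset]

lemma bitFinset_subset_range_iff {k L : ℕ} : bitFinset k ⊆ Finset.range L ↔ k < 2 ^ L := by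
  refine ⟨fun h => Nat.lt_pow_two_of_testBit k fun i hi => ?_, fun h i hi => ?_⟩
  · by_contra hbit
    have := Finset.mem_range.mp (h (mem_bitFinset.mpr (by simpa using hbit)))
    omega
  · have hle := Nat.ge_two_pow_of_testBit (mem_bitFinset.mp hi)
    exact Finset.mem_range.mpr ((Nat.pow_lt_pow_iff_right one_lt_two).mp (hle.trans_lt h))

lemma lt_two_pow_norm1 (k : ℕ) : k < 2 ^ norm1 k :=
  bitFinset_subset_range_iff.mp fun _ hi => Finset.mem_range.mpr <|
    Finset.single_le_sum (f := fun i => i + 1) (fun _ _ => Nat.zero_le _) hi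

@[simp]
lemma norm1Vec_zero {s : ℕ} : norm1Vec (0 : Fin s → ℕ) = 0 := by
  simp [norm1Vec, norm1, bitFinset]

/-- The box of all `k` whose coordinates have at most `L` binary digits. -/
def digitBox (s L : ℕ) : Finset (Fin s → ℕ) :=
  Fintype.piFinset fun _ => Finset.range (2 ^ L)

lemma mem_digitBox_of_norm1Vec_le {s L : ℕ} {k : Fin s → ℕ} (h : norm1Vec k ≤ L) :
    k ∈ digitBox s L := by
  refine Fintype.mem_piFinset.mpr fun j => Finset.mem_range.mpr ?_
  have hj : norm1 (k j) ≤ norm1Vec k :=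
    Finset.single_le_sum (f := fun j => norm1 (k j)) (fun _ _ => Nat.zero_le _) (Finset.mem_univ j)
  exact (lt_two_pow_norm1 _).trans_le (Nat.pow_le_pow_right two_pos (hj.trans h))

lemma setOf_norm1Vec_le (s N : ℕ) :
    {k : Fin s → ℕ | norm1Vec k ≤ N} = {k ∈ digitBox s N | norm1Vec k ≤ N} := by
  ext k
  simpa using mem_digitBox_of_norm1Vec_le

/-- The generating function `∏_{ℓ=1}^L (1 + e^{-ℓz})` of `‖κ‖₁` over `κ ⊆ {1,…,L}`. -/
noncomputable def digitGen (L : ℕ) (z : ℂ) : ℂ :=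
  ∏ i ∈ Finset.range L, (1 + Complex.exp (-((i + 1 : ℕ) * z)))

lemma continuous_digitGen (L : ℕ) : Continuous (digitGen L) := by
  unfold digitGen
  fun_prop

lemma digitGen_eq_sum (L : ℕ) (z : ℂ) :
    digitGen L z = ∑ k ∈ Finset.range (2 ^ L), Complex.exp (-(norm1 k * z)) := by
  rw [digitGen, Finset.prod_one_add]
  refine (Finset.sum_equiv Finset.equivBitIndices (fun k => ?_) fun k _ => ?_).symm
  · rw [Finset.mem_range, Finset.mem_powerset, ← bitFinset_eq_equivBitIndices,
      bitFinset_subset_range_iff]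
  · rw [← bitFinset_eq_equivBitIndices, ← Complex.exp_sum, norm1, Nat.cast_sum, Finset.sum_mul,
      Finset.sum_neg_distrib]

lemma digitGen_pow (s L : ℕ) (z : ℂ) :
    digitGen L z ^ s = ∑ k ∈ digitBox s L, Complex.exp (-(norm1Vec k * z)) := by
  have hpow : digitGen L z ^ s = ∏ _j : Fin s, digitGen L z := by simp
  simp_rw [hpow, digitGen_eq_sum, Finset.prod_univ_sum, ← Complex.exp_sum, norm1Vec, Nat.cast_sum,
    Finset.sum_mul, Finset.sum_neg_distrib]
  rfl

/-- The kernel `∑_{j=0}^N e^{jz}`, which turns Cauchy's coefficient formula into a formula for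
partial sums of coefficients. -/
noncomputable def expKernel (N : ℕ) (z : ℂ) : ℂ :=
  ∑ j ∈ Finset.range (N + 1), Complex.exp (j * z)

lemma continuous_expKernel (N : ℕ) : Continuous (expKernel N) := by
  unfold expKernel
  fun_prop

lemma integral_exp_mul_exp_neg (β : ℝ) (j n : ℕ) :
    ∫ θ in (-π)..π, Complex.exp (j * (β + θ * I)) * Complex.exp (-(n * (β + θ * I))) =
      if j = n then (2 * π : ℂ) else 0 := by
  rcases eq_or_ne j n with rfl | hjn
  · simp only [← Complex.exp_add, add_neg_cancel, Complex.exp_zero, if_true,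
      intervalIntegral.integral_const, sub_neg_eq_add, ← two_mul, Complex.real_smul, mul_one]
    push_cast
    rfl
  have hne : ((j : ℂ) - n) * I ≠ 0 :=
    mul_ne_zero (sub_ne_zero.mpr (mod_cast hjn)) Complex.I_ne_zero
  have hsplit (θ : ℝ) : Complex.exp (j * (β + θ * I)) * Complex.exp (-(n * (β + θ * I))) =
      Complex.exp ((j - n) * β) * Complex.exp ((j - n) * I * θ) := by
    rw [← Complex.exp_add, ← Complex.exp_add]
    ring_nf
  have hperiod : Complex.exp ((j - n) * I * π) = Complex.exp ((j - n) * I * (-π : ℝ)) := by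
    refine Complex.exp_eq_exp_iff_exists_int.mpr ⟨(j : ℤ) - n, ?_⟩
    push_cast
    ring
  simp_rw [hsplit, intervalIntegral.integral_const_mul, integral_exp_mul_complex hne, hperiod,
    sub_self, zero_div, mul_zero, if_neg hjn]

lemma integral_expKernel_mul_sum {ι : Type*} (T : Finset ι) (ν : ι → ℕ) (N : ℕ) (β : ℝ) :
    ∫ θ in (-π)..π, expKernel N (β + θ * I) * ∑ p ∈ T, Complex.exp (-(ν p * (β + θ * I))) =
      2 * π * ({p ∈ T | ν p ≤ N} : Finset ι).card := by
  simp_rw [expKernel, Finset.sum_mul_sum]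
  rw [intervalIntegral.integral_finsetSum
    fun _ _ => Continuous.intervalIntegrable (by fun_prop) _ _]
  have hinner (j : ℕ) : ∫ θ in (-π)..π, ∑ p ∈ T,
      Complex.exp (j * (β + θ * I)) * Complex.exp (-(ν p * (β + θ * I))) =
      ∑ p ∈ T, if j = ν p then (2 * π : ℂ) else 0 := by
    rw [intervalIntegral.integral_finsetSum
      fun _ _ => Continuous.intervalIntegrable (by fun_prop) _ _]
    exact Finset.sum_congr rfl fun p _ => integral_exp_mul_exp_neg β j (ν p)
  simp_rw [hinner]
  rw [Finset.sum_comm, Finset.card_filter, Nat.cast_sum, Finset.mul_sum]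
  refine Finset.sum_congr rfl fun p _ => ?_
  simp

lemma integral_expKernel_mul_digitGen_pow (s N : ℕ) (β : ℝ) :
    ∫ θ in (-π)..π, expKernel N (β + θ * I) * digitGen N (β + θ * I) ^ s =
      2 * π * {k : Fin s → ℕ | norm1Vec k ≤ N}.ncard := by
  simp_rw [digitGen_pow, integral_expKernel_mul_sum, setOf_norm1Vec_le, Set.ncard_coe_finset]

section TrapezoidRule

variable {E : Type*} [NormedAddCommGroup E] [NormedSpace ℝ E] [CompleteSpace E] {f f' f'' : ℝ → E}

lemma norm_trapezoid_sub_integral_le {a b : ℝ} (hab : a ≤ b)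
    (hf : ∀ t ∈ Set.Icc a b, HasDerivAt f (f' t) t)
    (hf' : ∀ t ∈ Set.Icc a b, HasDerivAt f' (f'' t) t) (hf'' : ContinuousOn f'' (Set.Icc a b)) :
    ‖((b - a) / 2) • (f a + f b) - ∫ t in a..b, f t‖ ≤ (b - a) ^ 2 / 8 * ∫ t in a..b, ‖f'' t‖ := by
  rw [← Set.uIcc_of_le hab] at hf hf' hf''
  -- `((t - a) (b - t) / 2) f'' + f` is the derivative of `Φ`.
  let Φ (t : ℝ) : E := ((t - a) * (b - t) / 2) • f' t - ((a + b) / 2 - t) • f t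
  have hΦ (t : ℝ) (ht : t ∈ Set.uIcc a b) :
      HasDerivAt Φ (((t - a) * (b - t) / 2) • f'' t + f t) t := by
    have hquad : HasDerivAt (fun t => (t - a) * (b - t) / 2) ((a + b) / 2 - t) t :=
      ((((hasDerivAt_id t).sub_const a).mul ((hasDerivAt_id t).const_sub b)).div_const
        2).congr_deriv (by simp; ring)
    refine ((hquad.smul (hf' t ht)).sub
      (((hasDerivAt_id t).const_sub _).smul (hf t ht))).congr_deriv ?_
    simp only [id_eq]
    module
  have hf_cont : ContinuousOn f (Set.uIcc a b) := HasDerivAt.continuousOn hf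
  have hrest_cont : ContinuousOn (fun t => ((t - a) * (b - t) / 2) • f'' t) (Set.uIcc a b) := by
    fun_prop
  have herror : ((b - a) / 2) • (f a + f b) - ∫ t in a..b, f t =
      ∫ t in a..b, ((t - a) * (b - t) / 2) • f'' t := by
    have hftc := intervalIntegral.integral_eq_sub_of_hasDerivAt hΦ
      (hrest_cont.add hf_cont).intervalIntegrable
    rw [intervalIntegral.integral_add hrest_cont.intervalIntegrable
      hf_cont.intervalIntegrable] at hftc
    rw [sub_eq_iff_eq_add, hftc]
    simp only [Φ]
    module
  rw [herror, ← intervalIntegral.integral_const_mul]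
  refine intervalIntegral.norm_integral_le_of_norm_le hab (ae_of_all _ fun t ht => ?_)
    (hf''.norm.const_smul ((b - a) ^ 2 / 8)).intervalIntegrable
  rw [norm_smul, Real.norm_of_nonneg (by nlinarith [ht.1, ht.2])]
  exact mul_le_mul_of_nonneg_right (by nlinarith [sq_nonneg (a + b - 2 * t)]) (norm_nonneg _)

lemma norm_sum_range_sub_integral_le {n : ℕ} (hf : ∀ t ∈ Set.Icc 0 (n : ℝ), HasDerivAt f (f' t) t)
    (hf' : ∀ t ∈ Set.Icc 0 (n : ℝ), HasDerivAt f' (f'' t) t)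
    (hf'' : ContinuousOn f'' (Set.Icc 0 (n : ℝ))) :
    ‖∑ k ∈ Finset.range n, f (k + 1 : ℕ) + (1 / 2 : ℝ) • (f 0 - f n) - ∫ t in (0 : ℝ)..n, f t‖ ≤
      1 / 8 * ∫ t in (0 : ℝ)..n, ‖f'' t‖ := by
  have hsub {k : ℕ} (hk : k < n) : Set.Icc (k : ℝ) (k + 1 : ℕ) ⊆ Set.Icc 0 (n : ℝ) :=
    Set.Icc_subset_Icc k.cast_nonneg (by exact_mod_cast hk)
  have hle (k : ℕ) : (k : ℝ) ≤ (k + 1 : ℕ) := by simp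
  have hsum : ∑ k ∈ Finset.range n, f (k + 1 : ℕ) + (1 / 2 : ℝ) • (f 0 - f n) =
      ∑ k ∈ Finset.range n, (1 / 2 : ℝ) • (f k + f (k + 1 : ℕ)) := by
    have htelescope := Finset.sum_range_sub' (fun k : ℕ => f k) n
    simp only [Nat.cast_zero] at htelescope
    rw [← htelescope, Finset.smul_sum, ← Finset.sum_add_distrib]
    exact Finset.sum_congr rfl fun k _ => by module
  have hadj := intervalIntegral.sum_integral_adjacent_intervals (f := f) (μ := volume)
    fun k hk => ContinuousOn.intervalIntegrable_of_Icc (hle k)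
      (HasDerivAt.continuousOn fun t ht => hf t (hsub hk ht))
  have hadj'' := intervalIntegral.sum_integral_adjacent_intervals (f := (‖f'' ·‖)) (μ := volume)
    fun k hk => ContinuousOn.intervalIntegrable_of_Icc (hle k) (hf''.norm.mono (hsub hk))
  rw [Nat.cast_zero] at hadj hadj''
  rw [hsum, ← hadj, ← hadj'', ← Finset.sum_sub_distrib, Finset.mul_sum]
  refine norm_sum_le_of_le _ fun k hk => ?_
  have hk' := hsub (Finset.mem_range.mp hk)
  simpa using norm_trapezoid_sub_integral_le (hle k) (fun t ht => hf t (hk' ht))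
    (fun t ht => hf' t (hk' ht)) (hf''.mono hk')

end TrapezoidRule

section Asymptotics

/-- The function `t ↦ log (1 + e^{-tz})`; its values at `t = 1, …, L` are the logarithms of the
factors of `digitGen L z`. -/
noncomputable def logFactor (z : ℂ) (t : ℝ) : ℂ :=
  Complex.log (1 + Complex.exp (-(t * z)))

lemma norm_exp_neg_mul (z : ℂ) (t : ℝ) :
    ‖Complex.exp (-(t * z))‖ = Real.exp (-z.re * t) := by
  simp [Complex.norm_exp, mul_comm]

lemma hasDerivAt_exp_neg_mul (z : ℂ) (t : ℝ) :
    HasDerivAt (fun t : ℝ => Complex.exp (-(t * z))) (-z * Complex.exp (-(t * z))) t := by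
  simpa [mul_comm] using ((Complex.ofRealCLM.hasDerivAt (x := t)).mul_const z).neg.cexp

variable {z : ℂ} {t : ℝ}

lemma one_add_exp_mem_slitPlane (hz : 0 < z.re) (ht : 0 ≤ t) :
    1 + Complex.exp (-(t * z)) ∈ Complex.slitPlane := by
  rcases ht.eq_or_lt with rfl | ht
  · simp [Complex.mem_slitPlane_iff]
  · refine Complex.mem_slitPlane_of_norm_lt_one ?_
    rw [norm_exp_neg_mul, Real.exp_lt_one_iff]
    nlinarith

lemma hasDerivAt_logFactor (hz : 0 < z.re) (ht : 0 ≤ t) :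
    HasDerivAt (logFactor z) (-z * Complex.exp (-(t * z)) / (1 + Complex.exp (-(t * z)))) t :=
  ((hasDerivAt_exp_neg_mul z t).const_add 1).clog_real (one_add_exp_mem_slitPlane hz ht)

lemma hasDerivAt_deriv_logFactor (hz : 0 < z.re) (ht : 0 ≤ t) :
    HasDerivAt (fun t : ℝ => -z * Complex.exp (-(t * z)) / (1 + Complex.exp (-(t * z))))
      (z ^ 2 * Complex.exp (-(t * z)) / (1 + Complex.exp (-(t * z))) ^ 2) t :=
  (((hasDerivAt_exp_neg_mul z t).const_mul (-z)).div ((hasDerivAt_exp_neg_mul z t).const_add 1)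
    (Complex.slitPlane_ne_zero (one_add_exp_mem_slitPlane hz ht))).congr_deriv (by ring)

lemma continuousOn_logFactor (hz : 0 < z.re) : ContinuousOn (logFactor z) (Set.Ici 0) :=
  HasDerivAt.continuousOn fun _ ht => hasDerivAt_logFactor hz ht

lemma half_le_norm_one_add_exp (him : |z.im| ≤ z.re) (ht : 0 ≤ t) :
    1 / 2 ≤ ‖1 + Complex.exp (-(t * z))‖ := by
  rcases le_total (t * |z.im|) (π / 2) with hsmall | hlarge
  · have hre : 0 ≤ (Complex.exp (-(t * z))).re := by
      rw [Complex.exp_re]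
      refine mul_nonneg (Real.exp_pos _).le (Real.cos_nonneg_of_mem_Icc ?_)
      have himt : |t * z.im| ≤ π / 2 := by rwa [abs_mul, abs_of_nonneg ht]
      simpa [neg_le, and_comm] using abs_le.mp himt
    have hle := Complex.re_le_norm (1 + Complex.exp (-(t * z)))
    rw [Complex.add_re, Complex.one_re] at hle
    linarith
  · have hre : 1 ≤ z.re * t := by nlinarith [Real.pi_gt_three]
    have hnorm : ‖Complex.exp (-(t * z))‖ ≤ 1 / 2 := by
      rw [norm_exp_neg_mul]
      exact (Real.exp_le_exp.mpr (by linarith : -z.re * t ≤ -1)).trans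
        Real.exp_neg_one_lt_half.le
    have hle := norm_sub_norm_le (1 : ℂ) (-Complex.exp (-(t * z)))
    rw [norm_neg, sub_neg_eq_add, norm_one] at hle
    linarith

lemma norm_deriv_deriv_logFactor_le (him : |z.im| ≤ z.re) (ht : 0 ≤ t) :
    ‖z ^ 2 * Complex.exp (-(t * z)) / (1 + Complex.exp (-(t * z))) ^ 2‖ ≤
      8 * z.re ^ 2 * Real.exp (-z.re * t) := by
  have hz : ‖z‖ ^ 2 ≤ 2 * z.re ^ 2 := by
    rw [← Complex.normSq_eq_norm_sq, Complex.normSq_apply]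
    nlinarith [sq_le_sq' (by linarith [abs_nonneg z.im]) him, sq_abs z.im]
  have hden : (1 / 2 : ℝ) ^ 2 ≤ ‖1 + Complex.exp (-(t * z))‖ ^ 2 :=
    pow_le_pow_left₀ (by norm_num) (half_le_norm_one_add_exp him ht) 2
  rw [norm_div, norm_mul, norm_pow, norm_pow, norm_exp_neg_mul]
  calc ‖z‖ ^ 2 * Real.exp (-z.re * t) / ‖1 + Complex.exp (-(t * z))‖ ^ 2
      ≤ 2 * z.re ^ 2 * Real.exp (-z.re * t) / (1 / 2) ^ 2 := by gcongr
    _ = 8 * z.re ^ 2 * Real.exp (-z.re * t) := by ring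

lemma norm_logFactor_le (h : Real.exp (-z.re * t) ≤ 1 / 2) :
    ‖logFactor z t‖ ≤ 3 / 2 * Real.exp (-z.re * t) := by
  rw [← norm_exp_neg_mul] at h ⊢
  exact Complex.norm_log_one_add_half_le_self h

lemma integrableOn_logFactor (hz : 0 < z.re) : IntegrableOn (logFactor z) (Set.Ioi 0) := by
  have hcont := continuousOn_logFactor hz
  refine (integrable_norm_iff ((hcont.mono Set.Ioi_subset_Ici_self).aestronglyMeasurable
    measurableSet_Ioi)).mp (integrable_of_isBigO_exp_neg hz hcont.norm ?_)
  have hdecay : Tendsto (fun t : ℝ => Real.exp (-z.re * t)) atTop (𝓝 0) :=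
    Real.tendsto_exp_atBot.comp (tendsto_id.const_mul_atTop_of_neg (neg_neg_of_pos hz))
  refine Asymptotics.IsBigO.of_bound (3 / 2) ?_
  filter_upwards [hdecay.eventually_le_const one_half_pos] with t ht
  simpa [Real.abs_exp] using norm_logFactor_le ht

lemma hasSum_neg_one_pow_div_sq :
    HasSum (fun n : ℕ => (-1 : ℝ) ^ (n + 1) / (n : ℝ) ^ 2) (π ^ 2 / 12) := by
  have hfourier := (hasSum_one_div_nat_pow_mul_cos one_ne_zero
    (by norm_num : (1 / 2 : ℝ) ∈ Set.Icc 0 1)).neg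
  have hcos (n : ℕ) : Real.cos (2 * π * n * (1 / 2)) = (-1) ^ n := by
    rw [← Real.cos_nat_mul_pi]
    ring_nf
  simp only [hcos] at hfourier
  convert! hfourier using 1
  · ext n
    ring
  · norm_num [Polynomial.bernoulli, Finset.sum_range_succ, bernoulli_two]
    ring

lemma hasSum_logFactor (hz : 0 < z.re) (ht : 0 < t) :
    HasSum (fun n : ℕ => (-1) ^ (n + 1) / n * Complex.exp (-(n * z) * t)) (logFactor z t) := by
  have hlt : ‖Complex.exp (-(t * z))‖ < 1 := by
    rw [norm_exp_neg_mul, Real.exp_lt_one_iff]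
    nlinarith
  convert! Complex.hasSum_taylorSeries_log hlt using 2 with n
  rw [← Complex.exp_nat_mul, div_mul_eq_mul_div]
  ring_nf

lemma integral_Ioi_logFactor (hz : 0 < z.re) :
    ∫ t in Set.Ioi 0, logFactor z t = π ^ 2 / (12 * z) := by
  let term (n : ℕ) (t : ℝ) : ℂ := (-1) ^ (n + 1) / n * Complex.exp (-(n * z) * t)
  have hz0 : z ≠ 0 := by
    rintro rfl
    simp at hz
  have hre {n : ℕ} (hn : n ≠ 0) : (-(n * z)).re < 0 := by
    simpa using mul_pos (Nat.cast_pos.mpr hn.bot_lt) hz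
  have hterm_integrable (n : ℕ) : IntegrableOn (term n) (Set.Ioi 0) := by
    rcases eq_or_ne n 0 with rfl | hn
    · simp [term]
    · exact (integrableOn_exp_mul_complex_Ioi (hre hn) 0).const_mul _
  have hterm_integral (n : ℕ) :
      ∫ t in Set.Ioi 0, term n t = ((-1) ^ (n + 1) / n ^ 2 : ℝ) / z := by
    rcases eq_or_ne n 0 with rfl | hn
    · simp [term]
    · simp only [term, integral_const_mul, integral_exp_mul_complex_Ioi (hre hn)]
      push_cast
      simp only [mul_zero, Complex.exp_zero, neg_div_neg_eq]
      field_simp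
  have hterm_norm (n : ℕ) : ∫ t in Set.Ioi 0, ‖term n t‖ = 1 / (n : ℝ) ^ 2 / z.re := by
    rcases eq_or_ne n 0 with rfl | hn
    · simp [term]
    · have hnorm (t : ℝ) : ‖term n t‖ = 1 / n * Real.exp (-(n * z.re) * t) := by
        simp [term, Complex.norm_exp]
      simp_rw [hnorm, integral_const_mul]
      rw [integral_exp_mul_Ioi (by simpa using hre hn), mul_zero, Real.exp_zero, neg_div_neg_eq]
      field_simp
  have hsum := hasSum_integral_of_summable_integral_norm hterm_integrable
    (by simpa only [hterm_norm] using hasSum_zeta_two.summable.div_const _)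
  simp_rw [hterm_integral] at hsum
  rw [setIntegral_congr_fun measurableSet_Ioi fun t ht => (hasSum_logFactor hz ht).tsum_eq.symm,
    hsum.unique ((Complex.hasSum_ofReal.mpr hasSum_neg_one_pow_div_sq).div_const z)]
  push_cast
  field_simp

lemma digitGen_eq_exp_sum_logFactor (hz : 0 < z.re) (L : ℕ) :
    digitGen L z = Complex.exp (∑ k ∈ Finset.range L, logFactor z (k + 1 : ℕ)) := by
  rw [Complex.exp_sum]
  refine Finset.prod_congr rfl fun k _ => ?_
  rw [logFactor, Complex.exp_log (Complex.slitPlane_ne_zero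
    (one_add_exp_mem_slitPlane hz (Nat.cast_nonneg _))), Complex.ofReal_natCast]

lemma norm_sum_logFactor_sub_integral_le (hz : 0 < z.re) (him : |z.im| ≤ z.re) (L : ℕ) :
    ‖∑ k ∈ Finset.range L, logFactor z (k + 1 : ℕ) +
        (1 / 2 : ℝ) • (logFactor z 0 - logFactor z L) - ∫ t in (0 : ℝ)..L, logFactor z t‖ ≤
      z.re := by
  have hcont : ContinuousOn
      (fun t : ℝ => z ^ 2 * Complex.exp (-(t * z)) / (1 + Complex.exp (-(t * z))) ^ 2)
      (Set.Icc 0 (L : ℝ)) := by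
    refine ContinuousOn.div (by fun_prop) (by fun_prop) fun t ht => pow_ne_zero 2 ?_
    exact Complex.slitPlane_ne_zero (one_add_exp_mem_slitPlane hz ht.1)
  have hexp_integrable : IntegrableOn (fun t => 8 * z.re ^ 2 * Real.exp (-z.re * t)) (Set.Ioi 0) :=
    (integrableOn_exp_mul_Ioi (neg_neg_of_pos hz) 0).const_mul _
  refine (norm_sum_range_sub_integral_le (fun t ht => hasDerivAt_logFactor hz ht.1)
    (fun t ht => hasDerivAt_deriv_logFactor hz ht.1) hcont).trans ?_
  have hsecond : ∫ t in (0 : ℝ)..L,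
      ‖z ^ 2 * Complex.exp (-(t * z)) / (1 + Complex.exp (-(t * z))) ^ 2‖ ≤ 8 * z.re :=
    calc _ ≤ ∫ t in (0 : ℝ)..L, 8 * z.re ^ 2 * Real.exp (-z.re * t) :=
          intervalIntegral.integral_mono_on L.cast_nonneg
            (hcont.norm.intervalIntegrable_of_Icc L.cast_nonneg)
            (Continuous.intervalIntegrable (by fun_prop) _ _)
            fun t ht => norm_deriv_deriv_logFactor_le him ht.1
      _ ≤ ∫ t in Set.Ioi 0, 8 * z.re ^ 2 * Real.exp (-z.re * t) := by
          rw [intervalIntegral.integral_of_le L.cast_nonneg]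
          exact setIntegral_mono_set hexp_integrable (ae_of_all _ fun t => by positivity)
            Set.Ioc_subset_Ioi_self.eventuallyLE
      _ = 8 * z.re := by
          rw [integral_const_mul, integral_exp_mul_Ioi (neg_neg_of_pos hz), mul_zero,
            Real.exp_zero, neg_div_neg_eq]
          field_simp
  linarith

lemma norm_integral_Ioi_logFactor_le (hz : 0 < z.re) (h : Real.exp (-z.re * t) ≤ 1 / 2) :
    ‖∫ u in Set.Ioi t, logFactor z u‖ ≤ 3 / 2 * Real.exp (-z.re * t) / z.re := by
  have hneg : -z.re < 0 := neg_neg_of_pos hz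
  have hbound : ∀ u ∈ Set.Ioi t, ‖logFactor z u‖ ≤ 3 / 2 * Real.exp (-z.re * u) := fun u hu =>
    norm_logFactor_le ((Real.exp_le_exp.mpr (by nlinarith [Set.mem_Ioi.mp hu])).trans h)
  refine (norm_integral_le_of_norm_le ((integrableOn_exp_mul_Ioi hneg t).const_mul (3 / 2))
    (ae_restrict_of_forall_mem measurableSet_Ioi hbound)).trans_eq ?_
  rw [integral_const_mul, integral_exp_mul_Ioi hneg, neg_div_neg_eq, mul_div_assoc]

lemma norm_sum_logFactor_sub_le (hz : 0 < z.re) (hz_le : z.re ≤ 1 / 2) (him : |z.im| ≤ z.re)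
    {L : ℕ} (hL : Real.exp (-z.re * L) ≤ z.re ^ 2) :
    ‖∑ k ∈ Finset.range L, logFactor z (k + 1 : ℕ) -
      (π ^ 2 / (12 * z) - (Real.log 2 / 2 : ℝ))‖ ≤ 3 * z.re := by
  have hhalf : Real.exp (-z.re * L) ≤ 1 / 2 := hL.trans (by nlinarith)
  have htrapezoid := norm_sum_logFactor_sub_integral_le hz him L
  have hend : ‖(1 / 2 : ℝ) • logFactor z L‖ ≤ 1 / 2 * (3 / 2 * z.re ^ 2) := by
    rw [norm_smul, Real.norm_of_nonneg one_half_pos.le]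
    exact mul_le_mul_of_nonneg_left ((norm_logFactor_le hhalf).trans (by linarith)) (by norm_num)
  have htail : ‖∫ t in Set.Ioi (L : ℝ), logFactor z t‖ ≤ 3 / 2 * z.re := by
    refine (norm_integral_Ioi_logFactor_le hz hhalf).trans ?_
    rw [div_le_iff₀ hz]
    linarith
  have hzero : logFactor z 0 = Real.log 2 := by
    norm_num [logFactor, Complex.ofReal_log]
  have hintegrable := integrableOn_logFactor hz
  have hsplit := intervalIntegral.integral_interval_add_Ioi hintegrable
    (hintegrable.mono_set (Set.Ioi_subset_Ioi L.cast_nonneg))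
  rw [integral_Ioi_logFactor hz] at hsplit
  calc _ = ‖(∑ k ∈ Finset.range L, logFactor z (k + 1 : ℕ) +
          (1 / 2 : ℝ) • (logFactor z 0 - logFactor z L) - ∫ t in (0 : ℝ)..L, logFactor z t) +
          (1 / 2 : ℝ) • logFactor z L - ∫ t in Set.Ioi (L : ℝ), logFactor z t‖ := by
        rw [← hsplit, hzero]
        simp only [Complex.real_smul]
        push_cast
        ring_nf
    _ ≤ z.re + 1 / 2 * (3 / 2 * z.re ^ 2) + 3 / 2 * z.re :=
        norm_sub_le_of_le (norm_add_le_of_le htrapezoid hend) htail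
    _ ≤ 3 * z.re := by nlinarith

end Asymptotics

section MinorArc

lemma norm_one_add_le_mul_exp {w : ℂ} (hw : ‖w‖ ≤ 1) :
    ‖1 + w‖ ≤ (1 + ‖w‖) * Real.exp (-(‖w‖ - w.re) / 4) := by
  have hre : w.re ≤ ‖w‖ := Complex.re_le_norm w
  have hnorm : ‖1 + w‖ ^ 2 = (1 + ‖w‖) ^ 2 - 2 * (‖w‖ - w.re) := by
    rw [Complex.sq_norm, Complex.normSq_add, ← Complex.sq_norm w]
    simp only [map_one, one_mul, Complex.conj_re]
    ring
  refine (sq_le_sq₀ (norm_nonneg _) (by positivity)).mp ?_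
  calc ‖1 + w‖ ^ 2 ≤ (1 + ‖w‖) ^ 2 * (1 - (‖w‖ - w.re) / 2) := by
        rw [hnorm]
        nlinarith [mul_nonneg (sub_nonneg.mpr hre)
          (by nlinarith [norm_nonneg w] : 0 ≤ 4 - (1 + ‖w‖) ^ 2)]
    _ ≤ (1 + ‖w‖) ^ 2 * Real.exp (-((‖w‖ - w.re) / 2)) := by
        gcongr
        exact Real.one_sub_le_exp_neg _
    _ = ((1 + ‖w‖) * Real.exp (-(‖w‖ - w.re) / 4)) ^ 2 := by
        rw [mul_pow, ← Real.exp_nat_mul]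
        ring_nf

lemma norm_digitGen_le_mul_exp {β : ℝ} (hβ : 0 ≤ β) (θ : ℝ) (L : ℕ) :
    ‖digitGen L (β + θ * I)‖ ≤ ‖digitGen L β‖ *
      Real.exp (-(∑ l ∈ Finset.range (L + 1), Real.exp (-β) ^ l * (1 - Real.cos (l * θ))) / 4) := by
  have hnorm (l : ℕ) : ‖Complex.exp (-(l * (β + θ * I)))‖ = Real.exp (-β) ^ l := by
    rw [Complex.norm_exp, ← Real.exp_nat_mul]
    simp
  have hre (l : ℕ) : (Complex.exp (-(l * (β + θ * I)))).re =
      Real.exp (-β) ^ l * Real.cos (l * θ) := by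
    rw [Complex.exp_re, ← Real.exp_nat_mul]
    simp
  have hfactor (l : ℕ) : ‖1 + Complex.exp (-(l * (β + θ * I)))‖ ≤
      ‖1 + Complex.exp (-(l * β))‖ *
        Real.exp (-(Real.exp (-β) ^ l * (1 - Real.cos (l * θ))) / 4) := by
    have hle : Real.exp (-β) ^ l ≤ 1 :=
      pow_le_one₀ (Real.exp_pos _).le (Real.exp_le_one_iff.mpr (by linarith))
    have hreal : ‖1 + Complex.exp (-(l * β))‖ = 1 + Real.exp (-β) ^ l := by
      have hcast : 1 + Complex.exp (-(l * β)) = (1 + Real.exp (-β) ^ l : ℝ) := by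
        simp [← Complex.exp_nat_mul]
      rw [hcast, Complex.norm_of_nonneg (by positivity)]
    have := norm_one_add_le_mul_exp ((hnorm l).trans_le hle)
    rwa [hnorm, hre, ← mul_one_sub, ← hreal] at this
  rw [Finset.sum_range_succ', digitGen, digitGen, norm_prod, norm_prod, Nat.cast_zero, zero_mul,
    Real.cos_zero, sub_self, mul_zero, add_zero, ← Finset.sum_neg_distrib, Finset.sum_div,
    Real.exp_sum, ← Finset.prod_mul_distrib]
  exact Finset.prod_le_prod (fun _ _ => norm_nonneg _) fun l _ => hfactor (l + 1)

lemma sub_le_sum_norm_pow_sub_re_pow {w : ℂ} (hw : ‖w‖ < 1) (n : ℕ) :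
    1 / (1 - ‖w‖) - (1 / (1 - w)).re - 2 * ‖w‖ ^ n / (1 - ‖w‖) ≤
      ∑ l ∈ Finset.range n, (‖w‖ ^ l - (w ^ l).re) := by
  have hd : 0 < 1 - ‖w‖ := sub_pos.mpr hw
  have hd_le : 1 - ‖w‖ ≤ ‖1 - w‖ := by
    simpa using norm_sub_norm_le (1 : ℂ) w
  have hw_ne : w ≠ 1 := by
    rintro rfl
    simp at hw
  have hboundary : (w ^ n / (1 - w)).re ≥ -(‖w‖ ^ n / (1 - ‖w‖)) := by
    refine neg_le_of_neg_le (((neg_le_abs _).trans (Complex.abs_re_le_norm _)).trans ?_)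
    rw [norm_div, norm_pow]
    gcongr
  have hgeom : ∑ l ∈ Finset.range n, w ^ l = 1 / (1 - w) - w ^ n / (1 - w) := by
    rw [geom_sum_eq hw_ne, ← neg_div_neg_eq, neg_sub, neg_sub, sub_div]
  have hgeom_norm : ∑ l ∈ Finset.range n, ‖w‖ ^ l =
      1 / (1 - ‖w‖) - ‖w‖ ^ n / (1 - ‖w‖) := by
    rw [geom_sum_eq hw.ne, ← neg_div_neg_eq, neg_sub, neg_sub, sub_div]
  rw [Finset.sum_sub_distrib, ← Complex.re_sum, hgeom, hgeom_norm, Complex.sub_re,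
    mul_div_assoc]
  linarith

lemma sub_le_sum_pow_mul_one_sub_cos {r : ℝ} (hr : 0 ≤ r) (hr_lt : r < 1) (θ : ℝ) (n : ℕ) :
    r * (1 + r) * (1 - Real.cos θ) / ((1 - r) * ((1 - r) ^ 2 + 2 * r * (1 - Real.cos θ))) -
        2 * r ^ n / (1 - r) ≤
      ∑ l ∈ Finset.range n, r ^ l * (1 - Real.cos (l * θ)) := by
  have hnorm : ‖r * Complex.exp (θ * I)‖ = r := by
    rw [norm_mul, Complex.norm_exp_ofReal_mul_I, mul_one, Complex.norm_of_nonneg hr]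
  have hpow (l : ℕ) : ((r * Complex.exp (θ * I)) ^ l).re = r ^ l * Real.cos (l * θ) := by
    rw [mul_pow, ← Complex.exp_nat_mul, ← Complex.ofReal_pow, Complex.re_ofReal_mul, ← mul_assoc,
      ← Complex.ofReal_natCast, ← Complex.ofReal_mul, Complex.exp_ofReal_mul_I_re]
  have hnormSq : Complex.normSq (1 - r * Complex.exp (θ * I)) =
      (1 - r) ^ 2 + 2 * r * (1 - Real.cos θ) := by
    rw [Complex.normSq_apply]
    simp only [Complex.sub_re, Complex.one_re, Complex.re_ofReal_mul, Complex.exp_ofReal_mul_I_re,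
      Complex.sub_im, Complex.one_im, Complex.im_ofReal_mul, Complex.exp_ofReal_mul_I_im]
    linear_combination r ^ 2 * Real.sin_sq_add_cos_sq θ
  have hinv : (1 / (1 - r * Complex.exp (θ * I))).re =
      (1 - r * Real.cos θ) / ((1 - r) ^ 2 + 2 * r * (1 - Real.cos θ)) := by
    rw [one_div, Complex.inv_re, hnormSq]
    simp [Complex.exp_ofReal_mul_I_re]
  have hd : 1 - r ≠ 0 := by linarith
  have hD : (1 - r) ^ 2 + 2 * r * (1 - Real.cos θ) ≠ 0 := by
    have := mul_nonneg hr (sub_nonneg.mpr (Real.cos_le_one θ))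
    nlinarith [pow_pos (sub_pos.mpr hr_lt) 2]
  have hmain := sub_le_sum_norm_pow_sub_re_pow (hnorm.trans_lt hr_lt) n
  simp_rw [hnorm, hpow, hinv, ← mul_one_sub] at hmain
  convert! hmain using 2
  rw [div_sub_div _ _ hd hD]
  ring

lemma sq_div_five_le_one_sub_cos {θ : ℝ} (hθ : |θ| ≤ π) : θ ^ 2 / 5 ≤ 1 - Real.cos θ := by
  have hpi : 1 / 5 ≤ 2 / π ^ 2 := by
    rw [div_le_div_iff₀ (by norm_num) (by positivity)]
    nlinarith [Real.pi_lt_d2, Real.pi_pos]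
  nlinarith [Real.cos_le_one_sub_mul_cos_sq hθ, sq_nonneg θ]

lemma mul_le_one_sub_exp_neg {β : ℝ} (hβ : 0 ≤ β) (hβ_le : β ≤ 1 / 2) :
    2 / 3 * β ≤ 1 - Real.exp (-β) := by
  have hexp : Real.exp (-β) ≤ 1 / (1 + β) := by
    rw [Real.exp_neg, ← one_div]
    exact one_div_le_one_div_of_le (by linarith) (by linarith [Real.add_one_le_exp β])
  have hdiv : 1 / (1 + β) ≤ 1 - 2 / 3 * β := by
    rw [div_le_iff₀ (by linarith)]
    nlinarith
  linarith

lemma sub_le_sum_exp_neg_pow_mul_one_sub_cos {β θ : ℝ} (hβ : 0 < β) (hβ_le : β ≤ 1 / 2)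
    (hθ : |θ| ≤ π) (n : ℕ) :
    3 / 20 * (θ ^ 2 / (β * (β ^ 2 + θ ^ 2))) - 3 / β * Real.exp (-β) ^ n ≤
      ∑ l ∈ Finset.range n, Real.exp (-β) ^ l * (1 - Real.cos (l * θ)) := by
  have hcos := sq_div_five_le_one_sub_cos hθ
  have hd := mul_le_one_sub_exp_neg hβ.le hβ_le
  have hexp_lt : Real.exp (-β) < 1 := Real.exp_lt_one_iff.mpr (by linarith)
  refine le_trans ?_ (sub_le_sum_pow_mul_one_sub_cos (Real.exp_pos _).le hexp_lt θ n)
  have hr_ge : 1 - β ≤ Real.exp (-β) := Real.one_sub_le_exp_neg β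
  set r := Real.exp (-β)
  have hboundary : 2 * r ^ n / (1 - r) ≤ 3 / β * r ^ n := by
    have hpow : 0 ≤ r ^ n := by positivity
    rw [div_mul_eq_mul_div, div_le_div_iff₀ (by linarith) hβ]
    nlinarith
  refine sub_le_sub ?_ hboundary
  set v := r * (1 - Real.cos θ) with hv
  have hv_ge : θ ^ 2 / 10 ≤ v := by nlinarith
  have hv_nonneg : 0 ≤ v := (by positivity : 0 ≤ θ ^ 2 / 10).trans hv_ge
  have hmono : θ ^ 2 / (β ^ 2 + θ ^ 2) ≤ 10 * v / (β ^ 2 + 2 * v) := by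
    rw [div_le_div_iff₀ (by positivity) (by positivity)]
    nlinarith [sq_nonneg θ, sq_nonneg β]
  calc 3 / 20 * (θ ^ 2 / (β * (β ^ 2 + θ ^ 2)))
      = 3 / 2 / β * (θ ^ 2 / (β ^ 2 + θ ^ 2) / 10) := by field_simp; ring
    _ ≤ (1 + r) / β * (10 * v / (β ^ 2 + 2 * v) / 10) := by
        gcongr
        linarith
    _ = (1 + r) * v / (β * (β ^ 2 + 2 * v)) := by field_simp
    _ ≤ (1 + r) * v / ((1 - r) * ((1 - r) ^ 2 + 2 * v)) := by
        have : 0 < 1 - r := sub_pos.mpr hexp_lt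
        gcongr <;> linarith
    _ = _ := by
        rw [hv]
        ring_nf

lemma one_add_sq_le_mul_cube {β y : ℝ} (hβ : 0 < β) (hy : β ^ 3 * y ^ 2 ≤ π ^ 2) :
    1 + y ^ 2 ≤ (2 + 8 * π ^ 2) * (1 + y ^ 2 / (1 + β * y ^ 2)) ^ 3 := by
  set q := y ^ 2 / (1 + β * y ^ 2) with hq
  have hden : 0 < 1 + β * y ^ 2 := by positivity
  have hq_nonneg : 0 ≤ q := by positivity
  have hcube : 1 + q + q ^ 3 ≤ (1 + q) ^ 3 := by nlinarith [pow_nonneg hq_nonneg 2]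
  suffices y ^ 2 ≤ 2 * q + 8 * π ^ 2 * q ^ 3 by
    nlinarith [pow_nonneg hq_nonneg 3, sq_nonneg π, mul_nonneg (sq_nonneg π) hq_nonneg]
  rcases le_total (β * y ^ 2) 1 with hsmall | hlarge
  · have : y ^ 2 ≤ 2 * q := by
      rw [hq, mul_div_assoc', le_div_iff₀ hden]
      nlinarith [sq_nonneg y]
    have : 0 ≤ π ^ 2 * q ^ 3 := by positivity
    linarith
  · have hq_ge : 1 ≤ 2 * (β * q) := by
      rw [hq, mul_div_assoc', mul_div_assoc', le_div_iff₀ hden]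
      linarith
    have : β ^ 3 * y ^ 2 ≤ β ^ 3 * (8 * π ^ 2 * q ^ 3) :=
      calc β ^ 3 * y ^ 2 ≤ π ^ 2 * 1 ^ 3 := by linarith
        _ ≤ π ^ 2 * (2 * (β * q)) ^ 3 := by gcongr
        _ = β ^ 3 * (8 * π ^ 2 * q ^ 3) := by ring
    linarith [le_of_mul_le_mul_left this (pow_pos hβ 3)]

lemma one_add_pow_three_le_mul_exp {q : ℝ} (hq : 0 ≤ q) :
    (1 + q) ^ 3 ≤ 80 ^ 3 * Real.exp (3 / 80 * q) := by
  have hlin : 1 + q ≤ 80 * Real.exp (1 / 80 * q) := by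
    linarith [Real.add_one_le_exp (1 / 80 * q)]
  calc (1 + q) ^ 3 ≤ (80 * Real.exp (1 / 80 * q)) ^ 3 := pow_le_pow_left₀ (by positivity) hlin 3
    _ = 80 ^ 3 * Real.exp (3 / 80 * q) := by
      rw [mul_pow, ← Real.exp_nat_mul]
      ring_nf

lemma exists_norm_digitGen_le : ∃ C : ℝ, ∀ (L : ℕ) (β y : ℝ), 0 < β → β ≤ 1 / 2 →
    |β * √β * y| ≤ π → Real.exp (-β * L) ≤ β ^ 2 →
    ‖digitGen L (β + (β * √β * y : ℝ) * I)‖ ≤ ‖digitGen L β‖ * (C / (1 + y ^ 2)) := by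
  refine ⟨Real.exp (3 / 8) * ((2 + 8 * π ^ 2) * 80 ^ 3), fun L β y hβ hβ_le hy hL => ?_⟩
  set q := y ^ 2 / (1 + β * y ^ 2) with hq
  have hθ : (β * √β * y) ^ 2 = β ^ 3 * y ^ 2 := by
    rw [mul_pow, mul_pow, Real.sq_sqrt hβ.le]
    ring
  have hsum : 3 / 20 * q - 3 / 2 ≤ ∑ l ∈ Finset.range (L + 1),
      Real.exp (-β) ^ l * (1 - Real.cos (l * (β * √β * y))) := by
    refine le_trans (sub_le_sub (le_of_eq ?_) ?_)
      (sub_le_sum_exp_neg_pow_mul_one_sub_cos hβ hβ_le hy (L + 1))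
    · rw [hθ, hq]
      field_simp
    · have hpow : Real.exp (-β) ^ (L + 1) ≤ β ^ 2 := by
        rw [← Real.exp_nat_mul]
        refine (Real.exp_le_exp.mpr ?_).trans hL
        push_cast
        linarith
      rw [div_mul_eq_mul_div, div_le_iff₀ hβ]
      nlinarith
  refine (norm_digitGen_le_mul_exp hβ.le _ L).trans (mul_le_mul_of_nonneg_left ?_ (norm_nonneg _))
  rw [le_div_iff₀ (by positivity)]
  calc _ ≤ Real.exp (3 / 8 - 3 / 80 * q) * ((2 + 8 * π ^ 2) * (1 + q) ^ 3) := by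
        refine mul_le_mul (Real.exp_le_exp.mpr (by linarith)) (one_add_sq_le_mul_cube hβ ?_)
          (by positivity) (Real.exp_pos _).le
        rw [← hθ, ← sq_abs]
        gcongr
    _ ≤ Real.exp (3 / 8 - 3 / 80 * q) * ((2 + 8 * π ^ 2) * (80 ^ 3 * Real.exp (3 / 80 * q))) := by
        gcongr
        exact one_add_pow_three_le_mul_exp (by positivity)
    _ = Real.exp (3 / 8) * ((2 + 8 * π ^ 2) * 80 ^ 3) := by
        rw [Real.exp_sub]
        field_simp

end MinorArc

section SaddlePoint

/-- The point at height `β^(3/2) y` on the vertical line through the saddle point `β`; at this scale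
the integrand of Cauchy's formula is asymptotically Gaussian in `y`. -/
noncomputable def saddleLine (β y : ℝ) : ℂ :=
  β + (β * √β * y : ℝ) * I

lemma saddleLine_re (β y : ℝ) : (saddleLine β y).re = β := by
  simp [saddleLine]

lemma saddleLine_im (β y : ℝ) : (saddleLine β y).im = β * √β * y := by
  simp [saddleLine]

lemma saddleLine_eq_mul (β y : ℝ) : saddleLine β y = β * (1 + √β * y * I) := by
  rw [saddleLine]
  push_cast
  ring

lemma tendsto_one_add_sqrt_mul_I (y : ℝ) :
    Tendsto (fun β : ℝ => (1 + √β * y * I : ℂ)) (𝓝[>] 0) (𝓝 1) := by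
  have hcont : Continuous fun β : ℝ => (1 + √β * y * I : ℂ) := by fun_prop
  simpa using (hcont.tendsto 0).mono_left nhdsWithin_le_nhds

lemma tendsto_saddleLine (y : ℝ) :
    Tendsto (fun β => saddleLine β y) (𝓝[>] 0) (𝓝[≠] 0) := by
  refine tendsto_nhdsWithin_iff.mpr ⟨?_, ?_⟩
  · have hcont : Continuous fun β => saddleLine β y := by
      unfold saddleLine
      fun_prop
    simpa [saddleLine] using (hcont.tendsto 0).mono_left nhdsWithin_le_nhds
  · filter_upwards [self_mem_nhdsWithin] with β (hβ : 0 < β) hzero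
    exact hβ.ne' (by simpa [saddleLine_re] using congrArg Complex.re hzero)

lemma expKernel_mul_exp_sub_one (N : ℕ) (z : ℂ) :
    expKernel N z * (Complex.exp z - 1) = Complex.exp (N * z) * Complex.exp z - 1 := by
  simp_rw [expKernel, Complex.exp_nat_mul, geom_sum_mul, pow_succ]

lemma re_mul_norm_expKernel_le {z : ℂ} (hz : 0 ≤ z.re) (hz_le : z.re ≤ 1 / 2) (N : ℕ) :
    z.re * ‖expKernel N z‖ ≤ 2 * Real.exp (N * z.re) := by
  have hnorm : ‖expKernel N z‖ ≤ ∑ j ∈ Finset.range (N + 1), Real.exp z.re ^ j :=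
    norm_sum_le_of_le _ fun j _ => by simp [Complex.norm_exp, ← Real.exp_nat_mul]
  have hexp : Real.exp z.re ≤ 2 := by
    have hsq : Real.exp (1 / 2) ^ 2 = Real.exp 1 := by
      rw [← Real.exp_nat_mul]
      norm_num
    refine (Real.exp_le_exp.mpr hz_le).trans ?_
    nlinarith [Real.exp_one_lt_d9, Real.exp_pos (1 / 2)]
  calc z.re * ‖expKernel N z‖
      ≤ (Real.exp z.re - 1) * ∑ j ∈ Finset.range (N + 1), Real.exp z.re ^ j :=
        mul_le_mul (by linarith [Real.add_one_le_exp z.re]) hnorm (norm_nonneg _)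
          (by linarith [Real.add_one_le_exp z.re])
    _ = Real.exp (N * z.re) * Real.exp z.re - 1 := by
        rw [mul_comm, geom_sum_mul, pow_succ, ← Real.exp_nat_mul]
    _ ≤ 2 * Real.exp (N * z.re) := by nlinarith [Real.exp_pos (N * z.re)]

variable {K : ℝ}

lemma eventually_exp_neg_mul_floor_le (hK : 0 < K) :
    ∀ᶠ β : ℝ in 𝓝[>] 0, Real.exp (-β * ⌊K / β ^ 2⌋₊) ≤ β ^ 2 := by
  have hdecay : Tendsto (fun β : ℝ => (K / β) ^ 2 * Real.exp (-(K / β))) (𝓝[>] 0) (𝓝 0) :=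
    (Real.tendsto_pow_mul_exp_neg_atTop_nhds_zero 2).comp
      (tendsto_inv_nhdsGT_zero.const_mul_atTop hK)
  filter_upwards [hdecay.eventually_le_const (by positivity : 0 < K ^ 2 / Real.exp 1),
    Ioc_mem_nhdsGT one_pos] with β hβ_exp ⟨hβ, hβ_le⟩
  have hfloor : K / β - 1 ≤ β * ⌊K / β ^ 2⌋₊ := by
    have := mul_le_mul_of_nonneg_left (Nat.lt_floor_add_one (K / β ^ 2)).le hβ.le
    have hmul : β * (K / β ^ 2) = K / β := by field_simp
    linarith
  calc Real.exp (-β * ⌊K / β ^ 2⌋₊) ≤ Real.exp (-(K / β) + 1) :=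
        Real.exp_le_exp.mpr (by linarith)
    _ = (β / K) ^ 2 * Real.exp 1 * ((K / β) ^ 2 * Real.exp (-(K / β))) := by
        rw [Real.exp_add]
        field_simp
    _ ≤ (β / K) ^ 2 * Real.exp 1 * (K ^ 2 / Real.exp 1) := by gcongr
    _ = β ^ 2 := by field_simp

lemma tendsto_mul_exp_mul_expKernel (hK : 0 < K) (y : ℝ) :
    Tendsto (fun β : ℝ => β * Complex.exp (-(⌊K / β ^ 2⌋₊ * saddleLine β y)) *
      expKernel ⌊K / β ^ 2⌋₊ (saddleLine β y)) (𝓝[>] 0) (𝓝 1) := by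
  have hslope : Tendsto (fun β => (Complex.exp (saddleLine β y) - 1) / saddleLine β y)
      (𝓝[>] 0) (𝓝 1) := by
    simpa [Function.comp_def, slope_def_field] using
      (Complex.hasDerivAt_exp 0).tendsto_slope.comp (tendsto_saddleLine y)
  have hexp : Tendsto (fun β => Complex.exp (saddleLine β y)) (𝓝[>] 0) (𝓝 1) := by
    simpa using ((tendsto_saddleLine y).mono_right nhdsWithin_le_nhds).cexp
  have hdecay : Tendsto (fun β : ℝ => Complex.exp (-(⌊K / β ^ 2⌋₊ * saddleLine β y)))
      (𝓝[>] 0) (𝓝 0) := by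
    have hsq : Tendsto (fun β : ℝ => β ^ 2) (𝓝[>] 0) (𝓝 0) := by
      simpa using ((continuous_pow 2).tendsto (0 : ℝ)).mono_left nhdsWithin_le_nhds
    refine squeeze_zero_norm' ?_ hsq
    filter_upwards [eventually_exp_neg_mul_floor_le hK] with β hβ
    refine le_of_eq_of_le ?_ hβ
    simp [Complex.norm_exp, saddleLine_re, mul_comm]
  have hlim := (hexp.sub hdecay).div
    (hslope.mul (tendsto_one_add_sqrt_mul_I y)) (by simp)
  rw [sub_zero, mul_one, div_one] at hlim
  refine hlim.congr' ?_
  filter_upwards [self_mem_nhdsWithin, hslope.eventually_ne one_ne_zero,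
    (tendsto_saddleLine y).eventually self_mem_nhdsWithin] with β (hβ : 0 < β) hne hz
  have hβ' : (β : ℂ) ≠ 0 := mod_cast hβ.ne'
  have hsub : Complex.exp (saddleLine β y) - 1 ≠ 0 := (div_ne_zero_iff.mp hne).1
  have hw : 1 + √β * y * I ≠ 0 := right_ne_zero_of_mul (saddleLine_eq_mul β y ▸ hz)
  have hquot : (Complex.exp (saddleLine β y) - 1) / saddleLine β y * (1 + √β * y * I) =
      (Complex.exp (saddleLine β y) - 1) / β := by
    nth_rewrite 2 [saddleLine_eq_mul]
    field_simp
  rw [Pi.div_apply, hquot, div_div_eq_mul_div, div_eq_iff hsub, mul_assoc _ (expKernel _ _),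
    expKernel_mul_exp_sub_one, Complex.exp_neg]
  field_simp [Complex.exp_ne_zero]

lemma div_sq_mul_saddleLine_add_div {β : ℝ} (hβ : 0 < β) (y : ℝ) :
    K / β ^ 2 * saddleLine β y + K / saddleLine β y - 2 * K / β =
      -K * y ^ 2 / (1 + √β * y * I) := by
  have hw : (1 + √β * y * I : ℂ) ≠ 0 := fun h => by simpa using congrArg Complex.re h
  have hβ' : (β : ℂ) ≠ 0 := mod_cast hβ.ne'
  have hsq : (√β : ℂ) ^ 2 = β := mod_cast Real.sq_sqrt hβ.le
  rw [saddleLine_eq_mul]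
  field_simp
  linear_combination K * y ^ 2 * I ^ 2 * hsq + β * K * y ^ 2 * Complex.I_sq

lemma tendsto_exp_floor_mul_saddleLine (hK : 0 < K) (y : ℝ) :
    Tendsto (fun β : ℝ => Complex.exp (⌊K / β ^ 2⌋₊ * saddleLine β y + K / saddleLine β y -
      2 * K / β)) (𝓝[>] 0) (𝓝 (Real.exp (-K * y ^ 2))) := by
  have hfract : Tendsto (fun β => ((K / β ^ 2 - ⌊K / β ^ 2⌋₊ : ℝ) : ℂ) * saddleLine β y)
      (𝓝[>] 0) (𝓝 0) := by
    refine squeeze_zero_norm (fun β => ?_)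
      (tendsto_norm_zero.comp ((tendsto_saddleLine y).mono_right nhdsWithin_le_nhds))
    have hfloor : 0 ≤ K / β ^ 2 - ⌊K / β ^ 2⌋₊ := sub_nonneg.mpr (Nat.floor_le (by positivity))
    rw [norm_mul, Complex.norm_of_nonneg hfloor]
    exact mul_le_of_le_one_left (norm_nonneg _) (by linarith [Nat.lt_floor_add_one (K / β ^ 2)])
  have hlim := (((tendsto_const_nhds (x := (-K * y ^ 2 : ℂ))).div (tendsto_one_add_sqrt_mul_I y)
    one_ne_zero).sub hfract).cexp
  rw [div_one, sub_zero] at hlim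
  push_cast
  refine hlim.congr' ?_
  filter_upwards [self_mem_nhdsWithin] with β (hβ : 0 < β)
  rw [Pi.div_apply, ← div_sq_mul_saddleLine_add_div hβ]
  push_cast
  ring_nf

variable {A : ℝ → ℂ → ℂ} {a : ℂ} {C : ℝ}

lemma tendsto_saddle_integrand (hK : 0 < K) {y : ℝ}
    (hA_lim : Tendsto (fun β => Complex.exp (-(K / saddleLine β y)) * A β (saddleLine β y))
      (𝓝[>] 0) (𝓝 a)) :
    Tendsto (fun β : ℝ => (β * Real.exp (-(2 * K / β))) •
      (expKernel ⌊K / β ^ 2⌋₊ (saddleLine β y) * A β (saddleLine β y)))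
      (𝓝[>] 0) (𝓝 (Real.exp (-K * y ^ 2) * a)) := by
  have hlim := ((tendsto_mul_exp_mul_expKernel hK y).mul
    (tendsto_exp_floor_mul_saddleLine hK y)).mul hA_lim
  rw [one_mul] at hlim
  refine hlim.congr fun β => ?_
  rw [Complex.exp_sub, Complex.exp_add, Complex.exp_neg, Complex.exp_neg, Complex.real_smul,
    Real.exp_neg]
  push_cast
  field_simp [Complex.exp_ne_zero]

lemma norm_saddle_integrand_le (hK : 0 ≤ K) {β y : ℝ} (hβ : 0 < β) (hβ_le : β ≤ 1 / 2)
    (hA_bound : Real.exp (-(K / β)) * ‖A β (saddleLine β y)‖ ≤ C * (1 + y ^ 2)⁻¹) :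
    ‖(β * Real.exp (-(2 * K / β))) •
      (expKernel ⌊K / β ^ 2⌋₊ (saddleLine β y) * A β (saddleLine β y))‖ ≤
      2 * C * (1 + y ^ 2)⁻¹ := by
  have hkernel : β * ‖expKernel ⌊K / β ^ 2⌋₊ (saddleLine β y)‖ ≤ 2 * Real.exp (K / β) := by
    have hre := saddleLine_re β y
    have hle := re_mul_norm_expKernel_le (hre.symm ▸ hβ.le) (hre.symm ▸ hβ_le) ⌊K / β ^ 2⌋₊
    rw [hre] at hle
    refine hle.trans (mul_le_mul_of_nonneg_left (Real.exp_le_exp.mpr ?_) two_pos.le)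
    calc ⌊K / β ^ 2⌋₊ * β ≤ K / β ^ 2 * β := by
          gcongr
          exact Nat.floor_le (by positivity)
      _ = K / β := by field_simp
  rw [norm_smul, Real.norm_of_nonneg (by positivity), norm_mul]
  calc β * Real.exp (-(2 * K / β)) * (‖expKernel ⌊K / β ^ 2⌋₊ (saddleLine β y)‖ *
        ‖A β (saddleLine β y)‖)
      = β * ‖expKernel ⌊K / β ^ 2⌋₊ (saddleLine β y)‖ *
          (Real.exp (-(2 * K / β)) * ‖A β (saddleLine β y)‖) := by ring
    _ ≤ 2 * Real.exp (K / β) * (Real.exp (-(2 * K / β)) * ‖A β (saddleLine β y)‖) := by gcongr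
    _ = 2 * (Real.exp (-(K / β)) * ‖A β (saddleLine β y)‖) := by
        have hexp : Real.exp (-(K / β)) = Real.exp (K / β) * Real.exp (-(2 * K / β)) := by
          rw [← Real.exp_add]
          ring_nf
        rw [hexp]
        ring
    _ ≤ 2 * C * (1 + y ^ 2)⁻¹ := by linarith

lemma integral_saddle_rescale (g : ℂ → ℂ) {β : ℝ} (hβ : 0 < β) :
    (Real.exp (-(2 * K / β)) / √β) • ∫ θ in (-π)..π, g (β + θ * I) =
      ∫ y, (β * Real.exp (-(2 * K / β))) •
        (Set.Ioc (-π) π).indicator (fun θ : ℝ => g (β + θ * I)) (β * √β * y) := by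
  rw [integral_smul, Measure.integral_comp_mul_left, integral_indicator measurableSet_Ioc,
    intervalIntegral.integral_of_le (by linarith [Real.pi_pos]), smul_smul,
    abs_of_pos (by positivity)]
  congr 1
  field_simp

theorem tendsto_integral_expKernel_mul (hK : 0 < K) (hA_cont : ∀ β, Continuous (A β))
    (hA_lim : ∀ y, Tendsto
      (fun β => Complex.exp (-(K / saddleLine β y)) * A β (saddleLine β y)) (𝓝[>] 0) (𝓝 a))
    (hA_bound : ∀ᶠ β in 𝓝[>] 0, ∀ y, |β * √β * y| ≤ π →
      Real.exp (-(K / β)) * ‖A β (saddleLine β y)‖ ≤ C * (1 + y ^ 2)⁻¹) :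
    Tendsto (fun β : ℝ => (Real.exp (-(2 * K / β)) / √β) •
      ∫ θ in (-π)..π, expKernel ⌊K / β ^ 2⌋₊ (β + θ * I) * A β (β + θ * I))
      (𝓝[>] 0) (𝓝 (√(π / K) * a)) := by
  have hgauss : ∫ y : ℝ, (Real.exp (-K * y ^ 2) : ℂ) * a = √(π / K) * a := by
    rw [integral_mul_const, integral_complex_ofReal, integral_gaussian]
  rw [← hgauss]
  refine Tendsto.congr' (eventually_nhdsWithin_of_forall fun β hβ =>
    (integral_saddle_rescale (fun z => expKernel ⌊K / β ^ 2⌋₊ z * A β z) hβ).symm) ?_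
  refine tendsto_integral_filter_of_dominated_convergence (fun y => 2 * C * (1 + y ^ 2)⁻¹)
    (Eventually.of_forall fun β => ?_) ?_ (integrable_inv_one_add_sq.const_mul _)
    (ae_of_all _ fun y => ?_)
  · have hcont : Continuous fun θ : ℝ => expKernel ⌊K / β ^ 2⌋₊ (β + θ * I) * A β (β + θ * I) :=
      ((continuous_expKernel _).comp (by fun_prop)).mul ((hA_cont β).comp (by fun_prop))
    exact (((hcont.measurable.indicator measurableSet_Ioc).comp
      (measurable_const_mul (β * √β))).const_smul
      (β * Real.exp (-(2 * K / β)))).aestronglyMeasurable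
  · filter_upwards [hA_bound, Ioc_mem_nhdsGT one_half_pos] with β hbound ⟨hβ, hβ_le⟩
    refine ae_of_all _ fun y => ?_
    by_cases hy : β * √β * y ∈ Set.Ioc (-π) π
    · rw [Set.indicator_of_mem hy]
      exact norm_saddle_integrand_le hK.le hβ hβ_le (hbound y (abs_le.mpr ⟨hy.1.le, hy.2⟩))
    · have hC := (by positivity : 0 ≤ Real.exp _ * ‖_‖).trans (hbound 0 (by simp [Real.pi_pos.le]))
      rw [Set.indicator_of_notMem hy, smul_zero, norm_zero]
      have : 0 ≤ C := by simpa using hC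
      positivity
  · refine (tendsto_saddle_integrand hK (hA_lim y)).congr' ?_
    have hzero : Tendsto (fun β => β * √β * y) (𝓝[>] 0) (𝓝 0) := by
      have hcont : Continuous fun β : ℝ => β * √β * y := by fun_prop
      simpa using (hcont.tendsto 0).mono_left nhdsWithin_le_nhds
    filter_upwards [hzero.eventually (Ioc_mem_nhds (neg_neg_of_pos Real.pi_pos) Real.pi_pos)]
      with β (hβ : β * √β * y ∈ Set.Ioc (-π) π)
    rw [Set.indicator_of_mem hβ, saddleLine]

end SaddlePoint

section Counting

lemma eventually_abs_saddleLine_im_le (y : ℝ) :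
    ∀ᶠ β in 𝓝[>] 0, |(saddleLine β y).im| ≤ (saddleLine β y).re := by
  have hzero : Tendsto (fun β : ℝ => √β * |y|) (𝓝[>] 0) (𝓝 0) := by
    have hcont : Continuous fun β : ℝ => √β * |y| := by fun_prop
    simpa using (hcont.tendsto 0).mono_left nhdsWithin_le_nhds
  filter_upwards [hzero.eventually_le_const one_pos, self_mem_nhdsWithin] with β hβ_le (hβ : 0 < β)
  rw [saddleLine_im, saddleLine_re, mul_assoc, abs_mul, abs_mul, abs_of_pos hβ,
    abs_of_nonneg (Real.sqrt_nonneg β)]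
  exact mul_le_of_le_one_right hβ.le hβ_le

variable {K : ℝ}

lemma tendsto_exp_neg_mul_digitGen (hK : 0 < K) (y : ℝ) :
    Tendsto (fun β => Complex.exp (-(π ^ 2 / (12 * saddleLine β y))) *
      digitGen ⌊K / β ^ 2⌋₊ (saddleLine β y)) (𝓝[>] 0) (𝓝 ((√2)⁻¹ : ℝ)) := by
  have hlog : Tendsto (fun β => ∑ k ∈ Finset.range ⌊K / β ^ 2⌋₊,
      logFactor (saddleLine β y) (k + 1 : ℕ) - π ^ 2 / (12 * saddleLine β y))
      (𝓝[>] 0) (𝓝 ((-(Real.log 2 / 2) : ℝ) : ℂ)) := by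
    have hlinear : Tendsto (fun β : ℝ => 3 * β) (𝓝[>] 0) (𝓝 0) := by
      simpa using ((continuous_const_mul 3).tendsto (0 : ℝ)).mono_left nhdsWithin_le_nhds
    refine tendsto_iff_norm_sub_tendsto_zero.mpr (squeeze_zero_norm' ?_ hlinear)
    filter_upwards [eventually_abs_saddleLine_im_le y, eventually_exp_neg_mul_floor_le hK,
      Ioc_mem_nhdsGT one_half_pos] with β him hfloor ⟨hβ, hβ_le⟩
    have hre := saddleLine_re β y
    have hle := norm_sum_logFactor_sub_le (hre.symm ▸ hβ) (hre.symm ▸ hβ_le) him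
      (hre.symm ▸ hfloor)
    rw [hre] at hle
    refine le_of_eq_of_le ?_ hle
    rw [norm_norm]
    congr 1
    push_cast
    ring
  have hexp : Real.exp (-(Real.log 2 / 2)) = (√2)⁻¹ := by
    rw [Real.exp_neg, Real.exp_half, Real.exp_log two_pos]
  rw [← hexp, Complex.ofReal_exp]
  refine hlog.cexp.congr' ?_
  filter_upwards [self_mem_nhdsWithin] with β (hβ : 0 < β)
  rw [digitGen_eq_exp_sum_logFactor (by rwa [saddleLine_re]), ← Complex.exp_add, neg_add_eq_sub]

lemma exp_neg_mul_norm_digitGen_le {β : ℝ} (hβ : 0 < β) (hβ_le : β ≤ 1 / 2) {L : ℕ}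
    (hL : Real.exp (-β * L) ≤ β ^ 2) :
    Real.exp (-(π ^ 2 / (12 * β))) * ‖digitGen L β‖ ≤ Real.exp (3 / 2) := by
  have hre : (β : ℂ).re = β := Complex.ofReal_re β
  have hlog := norm_sum_logFactor_sub_le (z := β) (hre.symm ▸ hβ) (hre.symm ▸ hβ_le)
    (by simpa using hβ.le) (hre.symm ▸ hL)
  have hsum := ((Complex.re_le_norm _).trans hlog)
  have hmain : (π ^ 2 / (12 * β) : ℂ) = (π ^ 2 / (12 * β) : ℝ) := by push_cast; rfl
  rw [hmain, Complex.sub_re, Complex.sub_re, Complex.ofReal_re, Complex.ofReal_re, hre] at hsum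
  rw [digitGen_eq_exp_sum_logFactor (hre.symm ▸ hβ), Complex.norm_exp, ← Real.exp_add]
  exact Real.exp_le_exp.mpr (by linarith [Real.log_pos one_lt_two])

lemma exists_exp_neg_mul_norm_digitGen_saddleLine_le (hK : 0 < K) :
    ∃ C : ℝ, 0 ≤ C ∧ ∀ᶠ β in 𝓝[>] 0, ∀ y, |β * √β * y| ≤ π →
      Real.exp (-(π ^ 2 / (12 * β))) * ‖digitGen ⌊K / β ^ 2⌋₊ (saddleLine β y)‖ ≤
        C * (1 + y ^ 2)⁻¹ := by
  obtain ⟨C, hC⟩ := exists_norm_digitGen_le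
  refine ⟨Real.exp (3 / 2) * |C|, by positivity, ?_⟩
  filter_upwards [eventually_exp_neg_mul_floor_le hK, Ioc_mem_nhdsGT one_half_pos]
    with β hfloor ⟨hβ, hβ_le⟩ y hy
  calc _ ≤ Real.exp (-(π ^ 2 / (12 * β))) *
        (‖digitGen ⌊K / β ^ 2⌋₊ β‖ * (C / (1 + y ^ 2))) := by
        gcongr
        exact hC _ β y hβ hβ_le hy hfloor
    _ = Real.exp (-(π ^ 2 / (12 * β))) * ‖digitGen ⌊K / β ^ 2⌋₊ β‖ * (C * (1 + y ^ 2)⁻¹) := by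
        ring
    _ ≤ Real.exp (-(π ^ 2 / (12 * β))) * ‖digitGen ⌊K / β ^ 2⌋₊ β‖ * (|C| * (1 + y ^ 2)⁻¹) := by
        gcongr
        exact le_abs_self C
    _ ≤ Real.exp (3 / 2) * (|C| * (1 + y ^ 2)⁻¹) := by
        gcongr
        exact exp_neg_mul_norm_digitGen_le hβ hβ_le hfloor
    _ = Real.exp (3 / 2) * |C| * (1 + y ^ 2)⁻¹ := by ring

lemma ncard_ne_zero_and_norm1Vec_le (s : ℕ) {x : ℝ} (hx : 0 ≤ x) :
    ({k : Fin s → ℕ | k ≠ 0 ∧ (norm1Vec k : ℝ) ≤ x}.ncard : ℝ) =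
      {k : Fin s → ℕ | norm1Vec k ≤ ⌊x⌋₊}.ncard - 1 := by
  have hfin : {k : Fin s → ℕ | norm1Vec k ≤ ⌊x⌋₊}.Finite := by
    rw [setOf_norm1Vec_le]
    exact Finset.finite_toSet _
  have hdiff : {k : Fin s → ℕ | k ≠ 0 ∧ (norm1Vec k : ℝ) ≤ x} =
      {k : Fin s → ℕ | norm1Vec k ≤ ⌊x⌋₊} \ {0} := by
    ext k
    simp [Nat.le_floor_iff hx, and_comm]
  rw [hdiff, ← Set.ncard_sdiff_singleton_add_one (a := 0) (by simp) hfin]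
  push_cast
  ring

theorem tendsto_exp_mul_ncard_norm1Vec_le {s : ℕ} (hs : 1 ≤ s) (hK : K = s * π ^ 2 / 12) :
    Tendsto (fun β : ℝ => Real.exp (-(2 * K / β)) / √β *
      {k : Fin s → ℕ | norm1Vec k ≤ ⌊K / β ^ 2⌋₊}.ncard) (𝓝[>] 0)
      (𝓝 (√(π / K) * (√2)⁻¹ ^ s / (2 * π))) := by
  have hK_pos : 0 < K := by rw [hK]; positivity
  have hK_div (z : ℂ) : -(K / z) = s * -(π ^ 2 / (12 * z)) := by
    rw [hK]
    push_cast
    field_simp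
  obtain ⟨C, hC_nonneg, hC⟩ := exists_exp_neg_mul_norm_digitGen_saddleLine_le hK_pos
  have hlim := tendsto_integral_expKernel_mul hK_pos
    (A := fun β z => digitGen ⌊K / β ^ 2⌋₊ z ^ s) (a := ((√2)⁻¹ ^ s : ℝ)) (C := C ^ s)
    (fun β => (continuous_digitGen _).pow s) (fun y => ?_) ?_
  · simp_rw [integral_expKernel_mul_digitGen_pow] at hlim
    have hre := ((Complex.continuous_re.tendsto _).comp hlim).div_const (2 * π)
    norm_cast at hre
    refine hre.congr fun β => ?_
    rw [Function.comp_apply, Complex.smul_re, Complex.ofReal_re, smul_eq_mul]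
    field_simp
  · have hpow := (tendsto_exp_neg_mul_digitGen hK_pos y).pow s
    simp_rw [mul_pow, ← Complex.exp_nat_mul, ← hK_div] at hpow
    exact_mod_cast hpow
  · filter_upwards [hC] with β hβ y hy
    have hexp : Real.exp (-(K / β)) = Real.exp (-(π ^ 2 / (12 * β))) ^ s := by
      rw [← Real.exp_nat_mul]
      exact congrArg Real.exp (mod_cast hK_div β)
    rw [hexp, norm_pow, ← mul_pow]
    calc _ ≤ (C * (1 + y ^ 2)⁻¹) ^ s := pow_le_pow_left₀ (by positivity) (hβ y hy) s
      _ = C ^ s * (1 + y ^ 2)⁻¹ ^ s := mul_pow _ _ _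
      _ ≤ C ^ s * (1 + y ^ 2)⁻¹ := by
          gcongr
          exact pow_le_of_le_one (by positivity) (inv_le_one_of_one_le₀ (by nlinarith)) (by omega)

lemma tendsto_exp_neg_div_sqrt {c : ℝ} (hc : 0 < c) :
    Tendsto (fun β => Real.exp (-(c / β)) / √β) (𝓝[>] 0) (𝓝 0) := by
  refine ((tendsto_rpow_mul_exp_neg_mul_atTop_nhds_zero (1 / 2) c hc).comp
    tendsto_inv_nhdsGT_zero).congr fun β => ?_
  rw [Function.comp_apply, ← Real.sqrt_eq_rpow, Real.sqrt_inv, neg_mul, ← div_eq_mul_inv,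
    mul_comm, ← div_eq_mul_inv]

/-- The main term `(12 / (s x))^(1/4) e^{π √(s x / 3)} / (2π 2^{s/2})` in the asymptotics of the
number of `k ≠ 0` with `norm1Vec k ≤ x`. -/
noncomputable def countMainTerm (s : ℕ) (x : ℝ) : ℝ :=
  √√(12 / (s * x)) * Real.exp (π * √(s * x / 3)) / (2 * π * √2 ^ s)

lemma countMainTerm_div_sq {s : ℕ} (hs : 1 ≤ s) {β : ℝ} (hβ : 0 < β) (hK : K = s * π ^ 2 / 12) :
    countMainTerm s (K / β ^ 2) =
      √(π / K) * (√2)⁻¹ ^ s / (2 * π) / (Real.exp (-(2 * K / β)) / √β) := by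
  have : (0 : ℝ) < s := mod_cast hs
  have hpi : π / K = 12 / (s * π) := by
    rw [hK]
    field_simp
  have hroot : 12 / (s * (K / β ^ 2)) = (12 / (s * π) * β) ^ 2 := by
    rw [hK]
    field_simp
  have hexponent : s * (K / β ^ 2) / 3 = (2 * K / (π * β)) ^ 2 := by
    rw [hK]
    field_simp
    norm_num
  have hK_nonneg : 0 ≤ K := by rw [hK]; positivity
  rw [countMainTerm, hroot, hexponent, Real.sqrt_sq (by positivity), Real.sqrt_sq (by positivity),
    Real.sqrt_mul (by positivity), hpi, Real.exp_neg, inv_pow]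
  field_simp

theorem count_le_asymptotic_general (s : ℕ) (hs : 1 ≤ s) :
    Tendsto (fun x : ℝ => ({k : Fin s → ℕ | k ≠ 0 ∧ (norm1Vec k : ℝ) ≤ x}.ncard : ℝ) /
      countMainTerm s x) atTop (𝓝 1) := by
  set K : ℝ := s * π ^ 2 / 12 with hK
  have hK_pos : 0 < K := by positivity
  set c : ℝ := √(π / K) * (√2)⁻¹ ^ s / (2 * π) with hc
  have hc_pos : 0 < c := by positivity
  have hβ : Tendsto (fun x => √(K / x)) atTop (𝓝[>] 0) := by
    refine tendsto_nhdsWithin_iff.mpr ⟨?_, ?_⟩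
    · simpa using (tendsto_const_nhds.div_atTop tendsto_id).sqrt
    · filter_upwards [eventually_gt_atTop 0] with x hx
      exact Real.sqrt_pos.mpr (by positivity)
  have hlim := (((tendsto_exp_mul_ncard_norm1Vec_le hs hK).sub
    (tendsto_exp_neg_div_sqrt (by positivity : 0 < 2 * K))).div_const c).comp hβ
  rw [sub_zero, div_self hc_pos.ne'] at hlim
  clear_value c
  refine hlim.congr' ?_
  filter_upwards [eventually_gt_atTop 0] with x hx
  have hx_eq : K / √(K / x) ^ 2 = x := by
    rw [Real.sq_sqrt (by positivity)]
    field_simp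
  have hmain := countMainTerm_div_sq hs (Real.sqrt_pos.mpr (by positivity : 0 < K / x)) hK
  rw [hx_eq] at hmain
  rw [Function.comp_apply, hx_eq, ncard_ne_zero_and_norm1Vec_le s hx.le, hmain, ← hc,
    div_div_eq_mul_div]
  ring

lemma lam_pos : 0 < lam := by
  have := Real.log_pos one_lt_two
  unfold lam
  positivity

lemma countMainTerm_lam {s : ℕ} (hs : 1 ≤ s) (m : ℕ) :
    countMainTerm s (lam * m ^ 2 / s) = √√(12 / lam) / (2 * π * √2 ^ s) * 2 ^ m / √m := by
  have hmul : s * (lam * m ^ 2 / s) = lam * m ^ 2 := by field_simp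
  have hexponent : lam * m ^ 2 / 3 = (m * Real.log 2 / π) ^ 2 := by
    rw [lam]
    field_simp
  have hexp : Real.exp (π * (m * Real.log 2 / π)) = 2 ^ m := by
    rw [mul_div_cancel₀ _ Real.pi_ne_zero, Real.exp_nat_mul, Real.exp_log two_pos]
  have := lam_pos
  rw [countMainTerm, hmul, hexponent, Real.sqrt_sq (by positivity), hexp, ← div_div 12,
    Real.sqrt_div (by positivity), Real.sqrt_sq (by positivity), Real.sqrt_div (by positivity)]
  ring

end Counting

/-- with `λ = 3log(2)²/π²`, the number of `𝐤 ∈ ℕ₀^s ∖ {0}` with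
`‖𝛋‖₁ ≤ λm²/s` is `∼ C·2^m/√m` for some constant `C > 0` depending on `s`. -/
theorem count_le_asymptotic (s : ℕ) (hs : 1 ≤ s) :
    ∃ C : ℝ, 0 < C ∧
      Filter.Tendsto
        (fun m : ℕ => ({k : Fin s → ℕ | k ≠ 0 ∧ (norm1Vec k : ℝ) ≤ lam * m ^ 2 / s}.ncard : ℝ) /
          (C * 2 ^ m / Real.sqrt m))
        Filter.atTop (nhds 1) := by
  have hlam := lam_pos
  have hx : Tendsto (fun m : ℕ => lam * (m : ℝ) ^ 2 / s) atTop atTop :=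
    (((tendsto_pow_atTop two_ne_zero).comp tendsto_natCast_atTop_atTop).const_mul_atTop
      hlam).atTop_div_const (mod_cast hs)
  exact ⟨√√(12 / lam) / (2 * π * √2 ^ s), by positivity,
    ((count_le_asymptotic_general s hs).comp hx).congr fun m =>
      by rw [Function.comp_apply, countMainTerm_lam hs]⟩

end MedianQMC
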